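/- Let (ψ_n)_{n≥0} be the orthonormal polynomials for the Akhiezer–Chebyshev weight w_α and define the para-orthogonal polynomials Λ_n^{(±α)}(z) = ψ_n*(z) − (ψ_n*(e^{±iα})/ψ_n(e^{±iα}))·ψ_n(z). Then there exists a constant C > 0, independent of n and θ, such that for every n ≥ 1 and every θ ∈ (α, 2π − α): |Λ_n^{(α)}(e^{iθ})| ≤ C·|e^{iθ} − e^{iα}|^{1/2} and |Λ_n^{(−α)}(e^{iθ})| ≤ C·|e^{iθ} − e^{−iα}|^{1/2}. -/

import Mathlib

/-!
Put `c = cos (α / 2)`, `S = sin (α / 2)` and parametrise the arc by `cos (θ / 2) = c cos φ`, `φ ∈ (0, π)`.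
The weight becomes the Bernstein-Szegő weight `S dφ / (1 - c² cos² φ)`, whose denominator is a multiple of
`|1 - r e^{2iφ}|²` with `r = (1 - S) / (1 + S)`. This yields the orthogonal polynomials explicitly: for
`n ≥ 0`, up to a constant factor,
`e^{-i(n+1)θ/2} ψ_{n+1}(e^{iθ}) = S cos (nφ) cos φ - sin (nφ) sin φ + i sin (θ/2) (1 - S)/c cos (nφ)`.
Orthogonality (`ip_Psi`) reduces, via Chebyshev polynomials, to the mean value property of a holomorphic
function on the disc (`key_pow`), and `ortho_unique` identifies the given `ψ` with these polynomials, the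
constant being bounded uniformly in `n` by the normalisation (`ip_Psi_self_lower`).

If `g` denotes the displayed function, then `|Λ(e^{iθ})|` is a bounded multiple of `|Im (g(0) conj (g(φ)))|`,
that is, of `|cos (nφ) (S cos φ - sin (θ/2)) - sin (nφ) sin φ|`. This is `O(√(1 - cos φ))` uniformly in `n`,
whereas `|e^{iθ} - e^{iα}| ≥ 2 S c (1 - cos φ)` (`Lambda_bound`). The estimate at `e^{-iα}` follows by
conjugation.
-/

open MeasureTheory Filter Set

/-- The Akhiezer-Chebyshev weight on the arc `(α, 2π - α)`. -/
noncomputable def wAC (α θ : ℝ) : ℝ :=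
  Real.sin (α / 2) /
    (2 * Real.sin (θ / 2) * Real.sqrt (Real.cos (α / 2) ^ 2 - Real.cos (θ / 2) ^ 2))

/-- The reversed polynomial `P*(z) = z^(deg P) ⬝ conj(P(1/conj z))`. -/
noncomputable def revPoly (P : Polynomial ℂ) : Polynomial ℂ :=
  (P.map (starRingEnd ℂ)).reverse

/-! ### Trigonometric orthogonality from the mean value property -/

lemma integral_zero_two_pi_eq_zero (F : ℂ → ℂ) (hF : DiffContOnCl ℂ F (Metric.ball 0 |1|)) (h0 : F 0 = 0) :
    ∫ φ in (0 : ℝ)..2 * Real.pi, F (Complex.exp (φ * Complex.I)) = 0 := by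
  have h := hF.circleAverage
  rw [h0, Real.circleAverage_def] at h
  have hpi : (2 * Real.pi)⁻¹ ≠ 0 := by positivity
  have h2 := (smul_eq_zero.mp h).resolve_left hpi
  simpa [circleMap] using h2

/-- A continuous function symmetric about `π` with zero integral over `[0, 2π]` has zero integral over
`[0, π]`. -/
lemma half_period (f : ℝ → ℝ) (hf : Continuous f) (h1 : ∀ x, f (2 * Real.pi - x) = f x)
    (h2 : ∫ φ in (0 : ℝ)..2 * Real.pi, f φ = 0) : ∫ φ in (0 : ℝ)..Real.pi, f φ = 0 := by
  have h3 : ∫ φ in (0 : ℝ)..Real.pi, f φ = ∫ φ in Real.pi..2 * Real.pi, f φ := by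
    have := intervalIntegral.integral_comp_sub_left (a := 0) (b := Real.pi) f (2 * Real.pi)
    simp only [h1] at this
    rw [this]; congr 1 <;> ring
  have h4 := intervalIntegral.integral_add_adjacent_intervals
    (hf.intervalIntegrable (μ := volume) 0 Real.pi) (hf.intervalIntegrable (μ := volume) Real.pi (2 * Real.pi))
  rw [h2, ← h3] at h4
  linarith

lemma den_pos {r : ℝ} (h0 : 0 ≤ r) (h1 : r < 1) (x : ℝ) :
    0 < 1 + r ^ 2 - 2 * r * Real.cos (2 * x) := by
  nlinarith [Real.cos_le_one (2 * x), mul_nonneg h0 (sub_nonneg.2 (Real.cos_le_one (2 * x)))]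

/-- For `k < N` the function `cos (N φ) - r cos ((N - 2) φ)` is orthogonal to `cos φ ^ k` with respect
to `dφ / |1 - r e^{2iφ}|²`: the integrand is the real part, on the unit circle, of a function that
is holomorphic on the closed disc and vanishes at the origin. -/
lemma key_pow (N k : ℕ) (hk : k < N) {r : ℝ} (h0 : 0 ≤ r) (h1 : r < 1) :
    ∫ φ in (0 : ℝ)..Real.pi, (Real.cos (N * φ) - r * Real.cos ((N - 2) * φ)) /
      (1 + r ^ 2 - 2 * r * Real.cos (2 * φ)) * Real.cos φ ^ k = 0 := by
  have hcont : Continuous fun φ : ℝ => (Real.cos (N * φ) - r * Real.cos ((N - 2) * φ)) /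
      (1 + r ^ 2 - 2 * r * Real.cos (2 * φ)) * Real.cos φ ^ k := by
    refine Continuous.mul (Continuous.div (by fun_prop) (by fun_prop) fun x => (den_pos h0 h1 x).ne') (by fun_prop)
  apply half_period _ hcont
  · intro x
    have e1 : Real.cos (N * (2 * Real.pi - x)) = Real.cos (N * x) := by
      rw [mul_sub, Real.cos_nat_mul_two_pi_sub]
    have e2 : Real.cos ((N - 2) * (2 * Real.pi - x)) = Real.cos ((N - 2) * x) := by
      have := Real.cos_int_mul_two_pi_sub ((N - 2) * x) ((N : ℤ) - 2)
      push_cast at this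
      rw [mul_sub, this]
    have e3 : Real.cos (2 * (2 * Real.pi - x)) = Real.cos (2 * x) := by
      have := Real.cos_nat_mul_two_pi_sub (2 * x) 2
      push_cast at this
      rw [mul_sub, this]
    rw [e1, e2, e3, Real.cos_two_pi_sub]
  -- On `w = e^{iφ}` one has `((w ^ 2 + 1) / 2) ^ k = w ^ k cos φ ^ k`, so
  -- `F w = w ^ N cos φ ^ k / (1 - r w ^ 2)`; `k < N` leaves a factor `w` to spare.
  · set F : ℂ → ℂ := fun w => w * w ^ (N - k - 1) * ((w ^ 2 + 1) / 2) ^ k / (1 - r * w ^ 2) with hFdef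
    have hne : ∀ w : ℂ, ‖w‖ ≤ 1 → (1 - r * w ^ 2 : ℂ) ≠ 0 := by
      intro w hw h
      have : ‖(r * w ^ 2 : ℂ)‖ = 1 := by rw [← sub_eq_zero.mp h]; simp
      rw [norm_mul, norm_pow, Complex.norm_real, Real.norm_of_nonneg h0] at this
      nlinarith [pow_le_one₀ (n := 2) (norm_nonneg w) hw, norm_nonneg w]
    have hF : DiffContOnCl ℂ F (Metric.ball 0 |1|) := by
      apply DifferentiableOn.diffContOnCl
      rw [closure_ball _ (by simp)]
      intro w hw
      have hw' : ‖w‖ ≤ 1 := by simpa using hw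
      apply DifferentiableAt.differentiableWithinAt
      exact DifferentiableAt.div (by fun_prop) (by fun_prop) (hne w hw')
    have hI := integral_zero_two_pi_eq_zero F hF (by simp [hFdef])
    have hre : ∀ φ : ℝ, (Real.cos (N * φ) - r * Real.cos ((N - 2) * φ)) /
      (1 + r ^ 2 - 2 * r * Real.cos (2 * φ)) * Real.cos φ ^ k = (F (Complex.exp (φ * Complex.I))).re := by
      intro φ
      set w := Complex.exp (φ * Complex.I) with hw
      have hw0 : w ≠ 0 := Complex.exp_ne_zero _
      have hwn : ‖w‖ = 1 := Complex.norm_exp_ofReal_mul_I φ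
      have hcos : (w ^ 2 + 1) / 2 = w * Complex.cos φ := by
        rw [Complex.cos, neg_mul, Complex.exp_neg, ← hw]; field_simp
      have e1 : F w = w ^ N / (1 - r * w ^ 2) * (Real.cos φ ^ k : ℝ) := by
        simp only [hFdef]
        rw [hcos, mul_pow]
        have : w ^ N = w * w ^ (N - k - 1) * w ^ k := by
          rw [← pow_succ', ← pow_add]; congr 1; omega
        rw [this]; push_cast; ring
      have hwN : w ^ N = Complex.cos (N * φ) + Complex.sin (N * φ) * Complex.I := by
        rw [hw, ← Complex.exp_nat_mul, ← Complex.exp_mul_I]; ring_nf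
      have hw2 : w ^ 2 = Complex.cos (2 * φ) + Complex.sin (2 * φ) * Complex.I := by
        rw [hw, ← Complex.exp_nat_mul, ← Complex.exp_mul_I]; push_cast; ring_nf
      rw [e1, Complex.re_mul_ofReal]
      congr 1
      have hD := den_pos h0 h1 φ
      have e2 : (1 - r * w ^ 2 : ℂ) = ((1 - r * Real.cos (2 * φ) : ℝ) : ℂ) + ((- (r * Real.sin (2 * φ)) : ℝ) : ℂ) * Complex.I := by
        rw [hw2]; push_cast; ring
      have e3 : w ^ N = ((Real.cos (N * φ) : ℝ) : ℂ) + ((Real.sin (N * φ) : ℝ) : ℂ) * Complex.I := by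
        rw [hwN]; push_cast; ring
      rw [e2, e3, Complex.div_re, Complex.normSq_add_mul_I]
      simp only [Complex.add_re, Complex.add_im, Complex.ofReal_re, Complex.ofReal_im, Complex.re_ofReal_mul, Complex.im_ofReal_mul, Complex.I_re, Complex.I_im]
      have e4 : (1 - r * Real.cos (2 * φ)) ^ 2 + (-(r * Real.sin (2 * φ))) ^ 2 = 1 + r ^ 2 - 2 * r * Real.cos (2 * φ) := by
        nlinarith [Real.sin_sq_add_cos_sq (2 * φ)]
      rw [e4, ← add_div]
      congr 1
      have : Real.cos ((N - 2) * φ) = Real.cos (N * φ) * Real.cos (2 * φ) + Real.sin (N * φ) * Real.sin (2 * φ) := by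
        rw [sub_mul, Real.cos_sub]
      rw [this]; ring
    simp only [hre]
    have hFc : Continuous fun φ : ℝ => F (Complex.exp (φ * Complex.I)) := by
      refine Continuous.div (by fun_prop) (by fun_prop) fun x => hne _ ?_
      rw [Complex.norm_exp_ofReal_mul_I]
    have := Complex.reCLM.intervalIntegral_comp_comm (hFc.intervalIntegrable (μ := volume) 0 (2 * Real.pi))
    simp only [Complex.reCLM_apply] at this
    rw [this, hI]; simp

lemma key_poly (N : ℕ) {r : ℝ} (h0 : 0 ≤ r) (h1 : r < 1) (A : Polynomial ℝ) (hA : A.natDegree < N) :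
    ∫ φ in (0 : ℝ)..Real.pi, (Real.cos (N * φ) - r * Real.cos ((N - 2) * φ)) /
      (1 + r ^ 2 - 2 * r * Real.cos (2 * φ)) * A.eval (Real.cos φ) = 0 := by
  simp only [Polynomial.eval_eq_sum_range, Finset.mul_sum]
  rw [intervalIntegral.integral_finsetSum]
  · refine Finset.sum_eq_zero fun k hk => ?_
    have := key_pow N k (by simp at hk; omega) h0 h1
    simp only [mul_left_comm _ (A.coeff k)]
    rw [intervalIntegral.integral_const_mul, this, mul_zero]
  · intro k _
    apply Continuous.intervalIntegrable
    refine Continuous.mul (Continuous.div (by fun_prop) (by fun_prop) fun x => (den_pos h0 h1 x).ne') (by fun_prop)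

/-! ### The half-angle parametrisation and the explicit polynomials -/

/-- `sin (θ / 2)` on the arc, in the parameter `φ` given by `cos (θ / 2) = c cos φ`. -/
noncomputable def sig (c φ : ℝ) : ℝ := Real.sqrt (1 - c ^ 2 * Real.cos φ ^ 2)

/-- The half-angle point `e^{iθ/2}` of the arc, where `cos (θ / 2) = c cos φ`; thus `uu c φ ^ 2 = e^{iθ}`.
The end point `e^{iα}` corresponds to `φ = 0`. -/
noncomputable def uu (c φ : ℝ) : ℂ := ((c * Real.cos φ : ℝ) : ℂ) + ((sig c φ : ℝ) : ℂ) * Complex.I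

/-- The value of `e^{-i(n+1)θ/2} Ψ(e^{iθ})` in the parameter `φ`, where `Ψ = Psi c S n` is the orthogonal
polynomial of degree `n + 1`. The real part is `cos (nφ) S cos φ - sin (nφ) sin φ`, the
imaginary part is `sin (θ / 2) (1 - S) / c * cos (nφ)`. -/
noncomputable def GG (c S : ℝ) (n : ℕ) (φ : ℝ) : ℂ :=
  ((S * Real.cos (n * φ) * Real.cos φ - Real.sin (n * φ) * Real.sin φ : ℝ) : ℂ) +
    ((sig c φ * ((1 - S) / c * Real.cos (n * φ)) : ℝ) : ℂ) * Complex.I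

open Polynomial in
/-- The (non-normalised) orthogonal polynomial of degree `n + 1` for the Akhiezer-Chebyshev weight, with
`c = cos (α / 2)` and `S = sin (α / 2)`. Degree zero is left out because the three-term recurrence
fails there. -/
noncomputable def Psi (c S : ℝ) : ℕ → ℝ[X]
  | 0 => C (1 / (2 * c)) * (X + C (2 * S - 1))
  | 1 => C (1 / (2 * c ^ 2)) * (X ^ 2 + C ((1 + S) * (2 * S - 1)) * X + C S)
  | n + 2 => C (1 / c) * ((X + 1) * Psi c S (n + 1)) - X * Psi c S n

section
variable {c S : ℝ}

/-- The radicand in `sig` is bounded below by `S ^ 2`, hence positive. -/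
lemma arg_lower (hcs : c ^ 2 + S ^ 2 = 1) (φ : ℝ) : S ^ 2 ≤ 1 - c ^ 2 * Real.cos φ ^ 2 := by
  nlinarith [mul_nonneg (sq_nonneg c) (sub_nonneg.2 (Real.cos_sq_le_one φ))]

lemma sig_sq (hcs : c ^ 2 + S ^ 2 = 1) (φ : ℝ) : sig c φ ^ 2 = 1 - c ^ 2 * Real.cos φ ^ 2 :=
  Real.sq_sqrt ((sq_nonneg S).trans (arg_lower hcs φ))

lemma le_sig (hcs : c ^ 2 + S ^ 2 = 1) (φ : ℝ) : S ≤ sig c φ :=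
  Real.le_sqrt_of_sq_le (arg_lower hcs φ)

lemma sig_le_one (φ : ℝ) : sig c φ ≤ 1 := by
  refine Real.sqrt_le_iff.2 ⟨zero_le_one, ?_⟩
  nlinarith [mul_nonneg (sq_nonneg c) (sq_nonneg (Real.cos φ))]

lemma sig_pi_sub (φ : ℝ) : sig c (Real.pi - φ) = sig c φ := by
  simp [sig, Real.cos_pi_sub]

@[fun_prop] lemma continuous_sig : Continuous (sig c) := by unfold sig; fun_prop
@[fun_prop] lemma continuous_uu : Continuous (uu c) := by unfold uu; fun_prop

lemma uu_sq (hcs : c ^ 2 + S ^ 2 = 1) (φ : ℝ) :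
    uu c φ ^ 2 = 2 * (c * Real.cos φ : ℝ) * uu c φ - 1 := by
  have h : ((sig c φ : ℝ) : ℂ) ^ 2 = 1 - ((c * Real.cos φ : ℝ) : ℂ) ^ 2 := by
    rw [← Complex.ofReal_pow, sig_sq hcs]; push_cast; ring
  unfold uu
  linear_combination (Complex.I ^ 2) * h + (1 - ((c * Real.cos φ : ℝ) : ℂ) ^ 2) * Complex.I_sq

/-- The substitution `φ ↦ π - φ` conjugates the point `e^{iθ}` of the arc. -/
lemma uu_pi_sub (φ : ℝ) : uu c (Real.pi - φ) ^ 2 = (starRingEnd ℂ) (uu c φ ^ 2) := by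
  have : uu c (Real.pi - φ) = - (starRingEnd ℂ) (uu c φ) := by
    simp only [uu, sig_pi_sub, Real.cos_pi_sub, map_add, map_mul, Complex.conj_ofReal, Complex.conj_I]
    push_cast; ring
  rw [this, map_pow, neg_sq]

lemma uu_norm (hcs : c ^ 2 + S ^ 2 = 1) (φ : ℝ) : ‖uu c φ‖ = 1 := by
  have : ‖uu c φ‖ ^ 2 = 1 := by
    rw [← Complex.normSq_eq_norm_sq, uu, Complex.normSq_add_mul_I, sig_sq hcs]; ring
  nlinarith [norm_nonneg (uu c φ)]

lemma uu_eq_exp (hc : 0 < c) (hS : 0 < S) (hcs : c ^ 2 + S ^ 2 = 1) (φ : ℝ) :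
    uu c φ = Complex.exp (Real.arccos (c * Real.cos φ) * Complex.I) := by
  have hc1 : c < 1 := by nlinarith
  have h1 : -1 ≤ c * Real.cos φ := by nlinarith [Real.neg_one_le_cos φ]
  have h2 : c * Real.cos φ ≤ 1 := by nlinarith [Real.cos_le_one φ]
  rw [Complex.exp_mul_I, ← Complex.ofReal_cos, ← Complex.ofReal_sin, Real.cos_arccos h1 h2,
    Real.sin_arccos, uu, sig, mul_pow]

lemma cos_rec (n : ℕ) (φ : ℝ) : Real.cos ((n + 2 : ℕ) * φ) =
    2 * Real.cos φ * Real.cos ((n + 1 : ℕ) * φ) - Real.cos (n * φ) := by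
  have e : ((n + 2 : ℕ) : ℝ) * φ = (n + 1 : ℕ) * φ + φ := by push_cast; ring
  have e' : (n : ℝ) * φ = (n + 1 : ℕ) * φ - φ := by push_cast; ring
  rw [e, e', Real.cos_add, Real.cos_sub]; ring

lemma sin_rec (n : ℕ) (φ : ℝ) : Real.sin ((n + 2 : ℕ) * φ) =
    2 * Real.cos φ * Real.sin ((n + 1 : ℕ) * φ) - Real.sin (n * φ) := by
  have e : ((n + 2 : ℕ) : ℝ) * φ = (n + 1 : ℕ) * φ + φ := by push_cast; ring
  have e' : (n : ℝ) * φ = (n + 1 : ℕ) * φ - φ := by push_cast; ring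
  rw [e, e', Real.sin_add, Real.sin_sub]; ring

lemma GG_rec (n : ℕ) (φ : ℝ) : GG c S (n + 2) φ =
    2 * (Real.cos φ : ℝ) * GG c S (n + 1) φ - GG c S n φ := by
  unfold GG
  rw [cos_rec, sin_rec]; push_cast; ring

lemma Psi_eval (hc : 0 < c) (hcs : c ^ 2 + S ^ 2 = 1) (n : ℕ) (φ : ℝ) :
    Polynomial.aeval (uu c φ ^ 2) (Psi c S n) = uu c φ ^ (n + 1) * GG c S n φ := by
  have hc' : (c : ℂ) ≠ 0 := by exact_mod_cast hc.ne'
  have hcs' : (c : ℂ) ^ 2 + (S : ℂ) ^ 2 = 1 := by exact_mod_cast hcs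
  have hu := uu_sq hcs φ
  have hsin : ((Real.sin φ : ℝ) : ℂ) ^ 2 = 1 - ((Real.cos φ : ℝ) : ℂ) ^ 2 := by
    rw [← Complex.ofReal_pow, Real.sin_sq]; push_cast; ring
  have hv : ((sig c φ : ℝ) : ℂ) * Complex.I = uu c φ - c * (Real.cos φ : ℝ) := by
    unfold uu; push_cast; ring
  have key : ∀ m, GG c S m φ = ((S * Real.cos (m * φ) * Real.cos φ - Real.sin (m * φ) * Real.sin φ : ℝ) : ℂ) +
      (uu c φ - c * (Real.cos φ : ℝ)) * ((1 - S) / c * (Real.cos (m * φ) : ℝ)) := by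
    intro m; rw [← hv, GG]; push_cast; ring
  induction n using Nat.twoStepInduction with
  | zero =>
    rw [key]
    simp only [Psi, map_mul, map_add, Polynomial.aeval_C, Polynomial.aeval_X]
    simp only [Nat.cast_zero, zero_mul, Real.cos_zero, Real.sin_zero, Complex.coe_algebraMap]
    push_cast at hu ⊢
    field_simp
    linear_combination (2 * S - 1) * hu
  | one =>
    rw [key]
    simp only [Psi, map_mul, map_add, map_pow, Polynomial.aeval_C, Polynomial.aeval_X]
    simp only [Nat.cast_one, one_mul, Complex.coe_algebraMap]
    push_cast at hu hsin ⊢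
    generalize (uu c φ) = u at *
    generalize Complex.cos φ = x at *
    generalize Complex.sin φ = y at *
    generalize (c : ℂ) = C at *
    generalize (S : ℂ) = T at *
    field_simp
    linear_combination 2 * u ^ 2 * hcs' + (T * (u ^ 2 + 1 + 2 * C * x * u) + (1 - T) * u ^ 2) * hu
      + 2 * u ^ 2 * C ^ 2 * hsin
  | more n ih1 ih2 =>
    simp only [Psi, map_mul, map_sub, map_add, map_one, Polynomial.aeval_C, Polynomial.aeval_X]
    rw [ih1, ih2, GG_rec]
    simp only [Complex.coe_algebraMap]
    push_cast at hu ⊢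
    have hu' : 1 / (c : ℂ) * (uu c φ ^ 2 + 1) = 2 * Complex.cos φ * uu c φ := by
      field_simp; linear_combination hu
    linear_combination uu c φ ^ (n + 2) * GG c S (n + 1) φ * hu'

/-- `Psi c S n` has degree `n + 1` with an explicit positive leading coefficient. -/
lemma Psi_coeff (n : ℕ) : (Psi c S n).natDegree ≤ n + 1 ∧
    (Psi c S n).coeff (n + 1) = 1 / (2 * c ^ (n + 1)) := by
  open Polynomial in
  induction n using Nat.twoStepInduction with
  | zero =>
    constructor
    · simp only [Psi]; compute_degree
    · simp only [Psi, coeff_C_mul, coeff_add, coeff_X, coeff_C]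
      simp
  | one =>
    constructor
    · simp only [Psi]; compute_degree
    · simp only [Psi, coeff_C_mul, coeff_add, coeff_X, coeff_C, coeff_X_pow]
      simp
  | more n ih1 ih2 =>
    have hX : (X * Psi c S n).natDegree ≤ n + 2 :=
      natDegree_mul_le.trans (by have := ih1.1; have := natDegree_X_le (R := ℝ); omega)
    have hX1 : ((X + 1 : ℝ[X])).natDegree ≤ 1 := by compute_degree
    have hX2 : ((X + 1 : ℝ[X]) * Psi c S (n + 1)).natDegree ≤ n + 3 :=
      natDegree_mul_le.trans (by have := ih2.1; omega)
    constructor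
    · simp only [Psi]
      refine (natDegree_sub_le _ _).trans (max_le ((natDegree_C_mul_le _ _).trans hX2) (by omega))
    · simp only [Psi, coeff_sub, coeff_C_mul]
      rw [coeff_eq_zero_of_natDegree_lt (p := X * Psi c S n) (show (X * Psi c S n).natDegree < n + 2 + 1 by omega),
        add_mul, one_mul, coeff_add, coeff_X_mul, ih2.2,
        coeff_eq_zero_of_natDegree_lt (show (Psi c S (n + 1)).natDegree < n + 2 + 1 by have := ih2.1; omega)]
      rw [pow_succ c (n + 2)]
      ring
end

/-! ### Orthogonality of the explicit polynomials -/

/-- The weight in the parameter `φ`: `wAC α θ dθ = wt c S φ dφ`. -/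
noncomputable def wt (c S φ : ℝ) : ℝ := S / sig c φ ^ 2

/-- The inner product of the weight (without the factor `1 / (2π)`), in the parameter `φ ∈ [0, π]`. -/
noncomputable def ip (c S : ℝ) (P Q : Polynomial ℂ) : ℂ :=
  ∫ φ in (0 : ℝ)..Real.pi, P.eval (uu c φ ^ 2) * (starRingEnd ℂ) (Q.eval (uu c φ ^ 2)) * (wt c S φ : ℂ)

section
variable {c S : ℝ}

lemma sig_pos (hS : 0 < S) (hcs : c ^ 2 + S ^ 2 = 1) (φ : ℝ) : 0 < sig c φ :=
  hS.trans_le (le_sig hcs φ)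

lemma continuous_wt (hS : 0 < S) (hcs : c ^ 2 + S ^ 2 = 1) : Continuous (wt c S) := by
  unfold wt
  exact Continuous.div (by fun_prop) (by fun_prop) fun x => (pow_pos (sig_pos hS hcs x) 2).ne'

lemma ip_continuous (hS : 0 < S) (hcs : c ^ 2 + S ^ 2 = 1) (P Q : Polynomial ℂ) :
    Continuous fun φ : ℝ => P.eval (uu c φ ^ 2) * (starRingEnd ℂ) (Q.eval (uu c φ ^ 2)) * (wt c S φ : ℂ) := by
  have h1 := continuous_wt hS hcs
  have h2 : Continuous fun φ => P.eval (uu c φ ^ 2) := P.continuous.comp (by fun_prop)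
  have h3 : Continuous fun φ => Q.eval (uu c φ ^ 2) := Q.continuous.comp (by fun_prop)
  have h4 := Complex.continuous_conj.comp h3
  exact (h2.mul h4).mul (Complex.continuous_ofReal.comp h1)

/-- Multiplying by one more half-angle factor turns the imaginary part into `sin (θ / 2)` times a Chebyshev
polynomial, and the real part into a multiple of the Bernstein-Szegő numerator of `key_pow`. -/
lemma GG_mul_uu (hc : 0 < c) (hS : 0 < S) (hcs : c ^ 2 + S ^ 2 = 1) (n : ℕ) (φ : ℝ) :
    GG c S n φ * uu c φ =
      ((c / 2 * (Real.cos ((n + 2 : ℕ) * φ) - (1 - S) / (1 + S) * Real.cos (n * φ)) : ℝ) : ℂ) +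
      ((sig c φ * Real.cos ((n + 1 : ℕ) * φ) : ℝ) : ℂ) * Complex.I := by
  have h := sig_sq hcs φ
  have e1 : Real.cos ((n + 1 : ℕ) * φ) = Real.cos (n * φ) * Real.cos φ - Real.sin (n * φ) * Real.sin φ := by
    rw [← Real.cos_add]; push_cast; ring_nf
  have h1S : 1 + S ≠ 0 := by positivity
  have e3 : (1 - S) / (1 + S) = 2 * (1 - S) / c ^ 2 - 1 := by
    have : c ^ 2 = (1 - S) * (1 + S) := by linarith
    have h1S' : 1 - S ≠ 0 := by
      intro h; rw [h, zero_mul] at this; exact hc.ne' (by simpa using this)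
    rw [this]; field_simp; ring
  have hc0 := hc.ne'
  rw [cos_rec, e1, e3]
  apply Complex.ext
  · simp only [GG, uu, Complex.mul_re, Complex.add_re, Complex.add_im, Complex.ofReal_re, Complex.ofReal_im,
      Complex.im_ofReal_mul, Complex.I_re, Complex.I_im]
    generalize Real.cos (n * φ) = A
    generalize Real.sin (n * φ) * Real.sin φ = B
    generalize Real.cos φ = x at *
    generalize sig c φ = s at *
    field_simp
    linear_combination (-2 * A * (1 - S)) * h
  · simp only [GG, uu, Complex.mul_im, Complex.add_re, Complex.add_im, Complex.ofReal_re, Complex.ofReal_im,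
      Complex.re_ofReal_mul, Complex.I_re, Complex.I_im]
    field_simp
    ring

/-- The coefficients of `Psi` are real and `φ ↦ π - φ` conjugates the integrand, so the moments are real. -/
lemma ip_Psi_im (n k : ℕ) :
    (ip c S ((Psi c S n).map (algebraMap ℝ ℂ)) (Polynomial.X ^ k)).im = 0 := by
  rw [← Complex.conj_eq_iff_im]
  unfold ip
  set f : ℝ → ℂ := fun φ => ((Psi c S n).map (algebraMap ℝ ℂ)).eval (uu c φ ^ 2) *
    (starRingEnd ℂ) ((Polynomial.X ^ k : Polynomial ℂ).eval (uu c φ ^ 2)) * (wt c S φ : ℂ) with hf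
  have hsym : ∀ φ, f (Real.pi - φ) = (starRingEnd ℂ) (f φ) := by
    intro φ
    simp only [hf, wt, sig_pi_sub, map_mul, Polynomial.eval_map_algebraMap, Polynomial.eval_pow,
      Polynomial.eval_X, Complex.conj_ofReal]
    rw [uu_pi_sub, Polynomial.aeval_conj, ← map_pow]
  have h1 : ∫ φ in (0 : ℝ)..Real.pi, f (Real.pi - φ) = ∫ φ in (0 : ℝ)..Real.pi, f φ := by
    rw [intervalIntegral.integral_comp_sub_left]; simp
  simp only [hsym] at h1
  rw [← intervalIntegral.intervalIntegral_conj, h1]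

/-- The denominator of the weight is a multiple of `|1 - r e^{2iφ}|²` with `r = (1 - S) / (1 + S)`. -/
lemma kappa (hS : 0 < S) (hcs : c ^ 2 + S ^ 2 = 1) (φ : ℝ) :
    sig c φ ^ 2 = (1 + S) ^ 2 / 4 * (1 + ((1 - S) / (1 + S)) ^ 2 - 2 * ((1 - S) / (1 + S)) * Real.cos (2 * φ)) := by
  rw [sig_sq hcs, Real.cos_two_mul]
  have h1S : 1 + S ≠ 0 := by positivity
  field_simp
  linear_combination (-4) * Real.cos φ ^ 2 * hcs

/-- With `m = n - 2k` and `τ = θ / 2`, the real part of the integrand is that of `GG * uu * e^{imτ}` times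
the weight; expanding `cos (mτ)` and `sin (mτ)` by Chebyshev polynomials in `c cos φ` leaves two integrals
that vanish by `key_poly`. -/
lemma ip_Psi_re (hc : 0 < c) (hS : 0 < S) (hcs : c ^ 2 + S ^ 2 = 1) (n k : ℕ) (hk : k ≤ n) :
    (ip c S ((Psi c S n).map (algebraMap ℝ ℂ)) (Polynomial.X ^ k)).re = 0 := by
  set m : ℤ := n - 2 * k with hm
  set r := (1 - S) / (1 + S) with hr
  have hS1 : S < 1 := by nlinarith
  have hr0 : 0 ≤ r := div_nonneg (by linarith) (by linarith)
  have hr1 : r < 1 := by rw [hr, div_lt_one (by linarith)]; linarith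
  set A : Polynomial ℝ := (Polynomial.Chebyshev.T ℝ m).comp (Polynomial.C c * Polynomial.X) with hA
  set B : Polynomial ℝ := (Polynomial.Chebyshev.U ℝ (m - 1)).comp (Polynomial.C c * Polynomial.X) with hB
  have hlin : (Polynomial.C c * Polynomial.X : Polynomial ℝ).natDegree ≤ 1 := by compute_degree
  have hAdeg : A.natDegree < n + 2 := by
    refine Polynomial.natDegree_comp_le.trans_lt ?_
    rw [Polynomial.Chebyshev.natDegree_T]
    have : m.natAbs ≤ n := by omega
    nlinarith
  have hBdeg : B.natDegree < n + 1 := by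
    refine Polynomial.natDegree_comp_le.trans_lt ?_
    rw [Polynomial.Chebyshev.natDegree_U]
    have : (m - 1 + 1).natAbs - 1 ≤ n := by omega
    nlinarith
  have I1 := key_poly (n + 2) hr0 hr1 A hAdeg
  have I2 := key_poly (n + 1) le_rfl zero_lt_one B hBdeg
  have hre : ∀ φ, (((Psi c S n).map (algebraMap ℝ ℂ)).eval (uu c φ ^ 2) *
    (starRingEnd ℂ) ((Polynomial.X ^ k : Polynomial ℂ).eval (uu c φ ^ 2)) * (wt c S φ : ℂ)).re =
      (S * (c / 2) / ((1 + S) ^ 2 / 4)) * ((Real.cos ((n + 2 : ℕ) * φ) - r * Real.cos (((n + 2 : ℕ) - 2) * φ)) /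
      (1 + r ^ 2 - 2 * r * Real.cos (2 * φ)) * A.eval (Real.cos φ)) -
      S * ((Real.cos ((n + 1 : ℕ) * φ) - 0 * Real.cos (((n + 1 : ℕ) - 2) * φ)) /
      (1 + 0 ^ 2 - 2 * 0 * Real.cos (2 * φ)) * B.eval (Real.cos φ)) := by
    intro φ
    set τ := Real.arccos (c * Real.cos φ) with hτ
    have hu := uu_eq_exp hc hS hcs φ
    rw [← hτ] at hu
    have hc1 : c < 1 := by nlinarith
    have hcosτ : Real.cos τ = c * Real.cos φ :=
      Real.cos_arccos (by nlinarith [Real.neg_one_le_cos φ]) (by nlinarith [Real.cos_le_one φ])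
    have hsinτ : Real.sin τ = sig c φ := by rw [hτ, Real.sin_arccos, sig, mul_pow]
    have hAe : A.eval (Real.cos φ) = Real.cos (m * τ) := by
      rw [← Polynomial.Chebyshev.T_real_cos, hcosτ, hA]; simp
    have hBe : B.eval (Real.cos φ) * sig c φ = Real.sin (m * τ) := by
      have := Polynomial.Chebyshev.U_real_cos τ (m - 1)
      rw [hcosτ, hsinτ] at this
      rw [hB, Polynomial.eval_comp]
      simp only [Polynomial.eval_mul, Polynomial.eval_C, Polynomial.eval_X]
      rw [this]; push_cast; ring_nf
    have hunit : uu c φ * (starRingEnd ℂ) (uu c φ) = 1 := by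
      rw [Complex.mul_conj, Complex.normSq_eq_norm_sq, uu_norm hcs]; simp
    have hpow : uu c φ ^ n * (starRingEnd ℂ) (uu c φ) ^ (2 * k) =
        ((Real.cos (m * τ) : ℝ) : ℂ) + ((Real.sin (m * τ) : ℝ) : ℂ) * Complex.I := by
      rw [hu, ← Complex.exp_conj, ← Complex.exp_nat_mul, ← Complex.exp_nat_mul, ← Complex.exp_add]
      rw [Complex.ofReal_cos, Complex.ofReal_sin, ← Complex.exp_mul_I, hm]
      simp only [map_mul, Complex.conj_ofReal, Complex.conj_I]
      push_cast; ring_nf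
    have hval : ((Psi c S n).map (algebraMap ℝ ℂ)).eval (uu c φ ^ 2) *
        (starRingEnd ℂ) ((Polynomial.X ^ k : Polynomial ℂ).eval (uu c φ ^ 2)) =
        (GG c S n φ * uu c φ) * (uu c φ ^ n * (starRingEnd ℂ) (uu c φ) ^ (2 * k)) := by
      rw [Polynomial.eval_map_algebraMap, Psi_eval hc hcs]
      simp only [Polynomial.eval_pow, Polynomial.eval_X, map_pow]
      ring
    rw [Complex.re_mul_ofReal, hval, hpow, GG_mul_uu hc hS hcs]
    simp only [Complex.mul_re, Complex.add_re, Complex.add_im, Complex.ofReal_re, Complex.ofReal_im,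
      Complex.im_ofReal_mul, Complex.I_re, Complex.I_im]
    have hs := sig_pos hS hcs φ
    have hD := den_pos hr0 hr1 φ
    have hkap := kappa hS hcs φ
    rw [← hr] at hkap
    have e4 : (((n + 2 : ℕ) : ℝ) - 2) * φ = n * φ := by push_cast; ring
    rw [e4, hAe, ← hBe, ← hr]
    have w1 : wt c S φ = S / ((1 + S) ^ 2 / 4) / (1 + r ^ 2 - 2 * r * Real.cos (2 * φ)) := by
      rw [wt, hkap, div_div]
    have w2 : wt c S φ * sig c φ ^ 2 = S := by rw [wt]; field_simp
    have : (1 : ℝ) + 0 ^ 2 - 2 * 0 * Real.cos (2 * φ) = 1 := by ring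
    rw [this]
    linear_combination (c / 2 * (Real.cos ((n + 2 : ℕ) * φ) - r * Real.cos (n * φ)) * Real.cos (m * τ)) * w1
      - Real.cos ((n + 1 : ℕ) * φ) * B.eval (Real.cos φ) * w2
  have hcomm := Complex.reCLM.intervalIntegral_comp_comm
    ((ip_continuous hS hcs ((Psi c S n).map (algebraMap ℝ ℂ)) (Polynomial.X ^ k)).intervalIntegrable (μ := volume) 0 Real.pi)
  simp only [Complex.reCLM_apply] at hcomm
  rw [ip, ← hcomm]
  simp only [hre]
  rw [intervalIntegral.integral_sub, intervalIntegral.integral_const_mul, intervalIntegral.integral_const_mul, I1, I2]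
  · simp
  · apply Continuous.intervalIntegrable
    refine Continuous.mul (by fun_prop) (Continuous.mul (Continuous.div (by fun_prop) (by fun_prop) fun x => (den_pos hr0 hr1 x).ne') (by fun_prop))
  · apply Continuous.intervalIntegrable
    refine Continuous.mul (by fun_prop) (Continuous.mul (Continuous.div (by fun_prop) (by fun_prop) fun x => (den_pos le_rfl zero_lt_one x).ne') (by fun_prop))

lemma ip_Psi (hc : 0 < c) (hS : 0 < S) (hcs : c ^ 2 + S ^ 2 = 1) (n k : ℕ) (hk : k ≤ n) :
    ip c S ((Psi c S n).map (algebraMap ℝ ℂ)) (Polynomial.X ^ k) = 0 :=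
  Complex.ext (ip_Psi_re hc hS hcs n k hk) (ip_Psi_im n k)
end

/-! ### Uniqueness of orthogonal polynomials -/

section
variable {c S : ℝ}

lemma ip_add_left (hS : 0 < S) (hcs : c ^ 2 + S ^ 2 = 1) (P Q R : Polynomial ℂ) :
    ip c S (P + Q) R = ip c S P R + ip c S Q R := by
  unfold ip
  rw [← intervalIntegral.integral_add ((ip_continuous hS hcs P R).intervalIntegrable _ _)
    ((ip_continuous hS hcs Q R).intervalIntegrable _ _)]
  simp only [Polynomial.eval_add, add_mul]

lemma ip_C_mul_left (a : ℂ) (P R : Polynomial ℂ) :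
    ip c S (Polynomial.C a * P) R = a * ip c S P R := by
  unfold ip
  rw [← intervalIntegral.integral_const_mul]
  simp only [Polynomial.eval_mul, Polynomial.eval_C, mul_assoc]

lemma ip_conj (P R : Polynomial ℂ) : ip c S R P = (starRingEnd ℂ) (ip c S P R) := by
  unfold ip
  rw [← intervalIntegral.intervalIntegral_conj]
  simp only [map_mul, Complex.conj_conj, Complex.conj_ofReal]
  congr 1; ext φ; ring

lemma ip_lower (hS : 0 < S) (hcs : c ^ 2 + S ^ 2 = 1) (P : Polynomial ℂ) (n : ℕ)
    (h : ∀ k < n, ip c S P (Polynomial.X ^ k) = 0) (Q : Polynomial ℂ) (hQ : Q.degree < n) :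
    ip c S P Q = 0 := by
  rw [ip_conj, map_eq_zero]
  have key : ∀ s : Finset ℕ, (∀ k ∈ s, k < n) →
      ip c S (∑ k ∈ s, Polynomial.C (Q.coeff k) * Polynomial.X ^ k) P = 0 := by
    intro s
    induction s using Finset.induction_on with
    | empty => intro _; simp [ip]
    | insert a s ha ih =>
      intro hs
      rw [Finset.sum_insert ha, ip_add_left hS hcs, ip_C_mul_left, ip_conj P,
        h a (hs a (by simp)), ih fun k hk => hs k (by simp [hk])]
      simp
  rw [Q.as_sum_support_C_mul_X_pow]
  exact key _ fun k hk => by exact_mod_cast (Polynomial.le_degree_of_mem_supp k hk).trans_lt hQ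

/-- A polynomial of degree `n` orthogonal to `1, z, …, z^(n-1)` is proportional to `ψ n`. Positivity of the
form is not needed: a nonzero difference of degree `d < n` would pair nontrivially with `ψ d`. -/
lemma ortho_unique (hS : 0 < S) (hcs : c ^ 2 + S ^ 2 = 1) (ψ : ℕ → Polynomial ℂ)
    (hdeg : ∀ n : ℕ, (ψ n).degree = n) (h0 : ∀ n m, n ≠ m → ip c S (ψ n) (ψ m) = 0)
    (h1 : ∀ n, ip c S (ψ n) (ψ n) ≠ 0) (n : ℕ) (Ψ : Polynomial ℂ) (hΨ : Ψ.degree = n)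
    (hΨ0 : ∀ k < n, ip c S Ψ (Polynomial.X ^ k) = 0) :
    Polynomial.C Ψ.leadingCoeff * ψ n = Polynomial.C (ψ n).leadingCoeff * Ψ := by
  have hne : ∀ n, ψ n ≠ 0 := fun n h => by simpa [h] using hdeg n
  have hlc : ∀ n, (ψ n).leadingCoeff ≠ 0 := fun n => Polynomial.leadingCoeff_ne_zero.2 (hne n)
  have hΨne : Ψ ≠ 0 := fun h => by simp [h] at hΨ
  have hΨlc : Ψ.leadingCoeff ≠ 0 := Polynomial.leadingCoeff_ne_zero.2 hΨne
  -- A nonzero `D` of degree `d` is a nonzero multiple of `ψ d` plus terms of lower degree.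
  have split : ∀ D : Polynomial ℂ, D ≠ 0 → ∃ a : ℂ, a ≠ 0 ∧ ∃ E : Polynomial ℂ,
      E.degree < D.degree ∧ D = Polynomial.C a * ψ D.natDegree + E := by
    intro D hD
    have ha : D.leadingCoeff / (ψ D.natDegree).leadingCoeff ≠ 0 :=
      div_ne_zero (Polynomial.leadingCoeff_ne_zero.2 hD) (hlc _)
    refine ⟨_, ha, D - Polynomial.C (D.leadingCoeff / (ψ D.natDegree).leadingCoeff) * ψ D.natDegree, ?_, by ring⟩
    apply Polynomial.degree_sub_lt_left _ hD
    · rw [Polynomial.leadingCoeff_mul, Polynomial.leadingCoeff_C, div_mul_cancel₀ _ (hlc _)]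
    · rw [Polynomial.degree_C_mul ha, hdeg, Polynomial.degree_eq_natDegree hD]
  have low : ∀ (d : ℕ) (Q : Polynomial ℂ), Q.degree < d → ∀ m, d ≤ m → ip c S Q (ψ m) = 0 := by
    intro d
    induction d with
    | zero =>
      intro Q hQ m _
      have : Q = 0 := Polynomial.degree_eq_bot.1 (Nat.WithBot.lt_zero_iff.1 hQ)
      simp [this, ip]
    | succ d ih =>
      intro Q hQ m hm
      by_cases hQ0 : Q = 0
      · simp [hQ0, ip]
      obtain ⟨a, -, E, hE, hQE⟩ := split Q hQ0
      have hnd : Q.natDegree < d + 1 := (Polynomial.natDegree_lt_iff_degree_lt hQ0).2 hQ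
      have hE' : E.degree < d := by
        refine hE.trans_le ?_
        rw [Polynomial.degree_eq_natDegree hQ0]; exact_mod_cast Nat.lt_succ_iff.1 hnd
      rw [hQE, ip_add_left hS hcs, ip_C_mul_left, h0 _ _ (by omega), ih E hE' m (by omega)]
      simp
  by_contra hcon
  set D := Polynomial.C Ψ.leadingCoeff * ψ n - Polynomial.C (ψ n).leadingCoeff * Ψ with hDdef
  have hD : D ≠ 0 := sub_ne_zero.2 hcon
  have hDdeg : D.degree < n := by
    have e : (Polynomial.C Ψ.leadingCoeff * ψ n).degree = n := by
      rw [Polynomial.degree_C_mul hΨlc, hdeg]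
    rw [← e]
    apply Polynomial.degree_sub_lt_left
    · rw [e, Polynomial.degree_C_mul (hlc n), hΨ]
    · intro h; rw [h] at e; simp at e
    · simp [mul_comm]
  obtain ⟨a, ha, E, hE, hDE⟩ := split D hD
  have hd : D.natDegree < n := (Polynomial.natDegree_lt_iff_degree_lt hD).2 hDdeg
  have hA : ip c S D (ψ D.natDegree) = a * ip c S (ψ D.natDegree) (ψ D.natDegree) := by
    conv_lhs => rw [hDE]
    rw [ip_add_left hS hcs, ip_C_mul_left]
    rw [Polynomial.degree_eq_natDegree hD] at hE
    have := low _ E hE D.natDegree le_rfl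
    rw [← hDE, this, add_zero]
  have hB : ip c S D (ψ D.natDegree) = 0 := by
    have e : ∀ Q, ip c S D Q = Ψ.leadingCoeff * ip c S (ψ n) Q + (-(ψ n).leadingCoeff) * ip c S Ψ Q := by
      intro Q
      rw [← ip_C_mul_left, ← ip_C_mul_left, ← ip_add_left hS hcs, hDdef]
      congr 1; simp; ring
    rw [e, h0 n _ (by omega), ip_lower hS hcs Ψ n hΨ0 _ (by rw [hdeg]; exact_mod_cast hd)]
    simp
  rw [hB] at hA
  exact mul_ne_zero ha (h1 _) hA.symm
end

/-! ### Norm and square-root bounds -/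

lemma integral_cos_sq_mul (n : ℕ) (hn : n ≠ 0) :
    ∫ φ in (0 : ℝ)..Real.pi, Real.cos (n * φ) ^ 2 = Real.pi / 2 := by
  have hn' : (n : ℝ) ≠ 0 := by exact_mod_cast hn
  rw [intervalIntegral.integral_comp_mul_left (fun x => Real.cos x ^ 2) hn', integral_cos_sq]
  simp only [Real.sin_nat_mul_pi, smul_eq_mul]
  simp
  field_simp

section
variable {c S : ℝ}

/-- A lower bound, uniform in `n`, for the squared norm of `Psi c S n`, from `|GG| ≥ S |cos ((n + 1) φ)|`. -/
lemma ip_Psi_self_lower (hc : 0 < c) (hS : 0 < S) (hcs : c ^ 2 + S ^ 2 = 1) (n : ℕ) :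
    S ^ 3 * (Real.pi / 2) ≤
      (ip c S ((Psi c S n).map (algebraMap ℝ ℂ)) ((Psi c S n).map (algebraMap ℝ ℂ))).re := by
  have hcont := ip_continuous hS hcs ((Psi c S n).map (algebraMap ℝ ℂ)) ((Psi c S n).map (algebraMap ℝ ℂ))
  have hcomm := Complex.reCLM.intervalIntegral_comp_comm (hcont.intervalIntegrable (μ := volume) 0 Real.pi)
  simp only [Complex.reCLM_apply] at hcomm
  rw [ip, ← hcomm, ← integral_cos_sq_mul (n + 1) (by omega), ← intervalIntegral.integral_const_mul]
  apply intervalIntegral.integral_mono_on Real.pi_pos.le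
  · exact Continuous.intervalIntegrable (by fun_prop) _ _
  · exact (Complex.continuous_re.comp hcont).intervalIntegrable _ _
  intro φ _
  have hs := sig_pos hS hcs φ
  rw [Complex.re_mul_ofReal, Complex.mul_conj, Complex.ofReal_re, Polynomial.eval_map_algebraMap,
    Psi_eval hc hcs, Complex.normSq_eq_norm_sq, norm_mul, norm_pow, uu_norm hcs, one_pow, one_mul]
  have h1 : ‖GG c S n φ‖ = ‖GG c S n φ * uu c φ‖ := by rw [norm_mul, uu_norm hcs, mul_one]
  have h2 : (sig c φ * Real.cos ((n + 1 : ℕ) * φ)) ^ 2 ≤ ‖GG c S n φ‖ ^ 2 := by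
    rw [h1, GG_mul_uu hc hS hcs, ← Complex.normSq_eq_norm_sq, Complex.normSq_add_mul_I]
    nlinarith [sq_nonneg (c / 2 * (Real.cos ((n + 2 : ℕ) * φ) - (1 - S) / (1 + S) * Real.cos (n * φ)))]
  have h3 : S ^ 2 ≤ sig c φ ^ 2 := pow_le_pow_left₀ hS.le (le_sig hcs φ) 2
  have h4 : S ≤ wt c S φ := by
    rw [wt, le_div_iff₀ (by positivity)]
    have : sig c φ ^ 2 ≤ 1 := pow_le_one₀ hs.le (sig_le_one φ)
    nlinarith
  calc S ^ 3 * Real.cos ((n + 1 : ℕ) * φ) ^ 2 = (S ^ 2 * Real.cos ((n + 1 : ℕ) * φ) ^ 2) * S := by ring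
    _ ≤ ‖GG c S n φ‖ ^ 2 * wt c S φ := by
      refine mul_le_mul ?_ h4 hS.le (sq_nonneg _)
      refine le_trans ?_ h2
      rw [mul_pow]
      exact mul_le_mul_of_nonneg_right h3 (sq_nonneg _)

/-- On the unit circle `P*(z) = z ^ n * conj (P z)`. -/
lemma revPoly_eval (P : Polynomial ℂ) {z : ℂ} (hz : ‖z‖ = 1) :
    (revPoly P).eval z = z ^ P.natDegree * (starRingEnd ℂ) (P.eval z) := by
  have hz0 : z ≠ 0 := by intro h; simp [h] at hz
  have hunit : z * (starRingEnd ℂ) z = 1 := by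
    rw [Complex.mul_conj, Complex.normSq_eq_norm_sq, hz]; simp
  let _ : Invertible ((starRingEnd ℂ) z) := ⟨z, hunit, by rw [mul_comm]; exact hunit⟩
  have h := Polynomial.eval₂_reverse_mul_pow (RingHom.id ℂ) ((starRingEnd ℂ) z) (P.map (starRingEnd ℂ))
  have hinv : ⅟((starRingEnd ℂ) z) = z := rfl
  rw [hinv, Polynomial.natDegree_map] at h
  rw [← Polynomial.eval₂_at_apply, ← Polynomial.eval_map]
  change (revPoly P).eval z * _ = (P.map (starRingEnd ℂ)).eval _ at h
  rw [← h, mul_comm, mul_assoc, ← mul_pow, mul_comm _ z, hunit]; simp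

/-- The square-root bound at the end point `φ = 0`. Up to unimodular and bounded factors the para-orthogonal
polynomial is `cos (nφ) (S cos φ - sig c φ) - sin (nφ) sin φ`, which is at most `5 √(1 - cos φ)`, while the
distance to the end point is at least `2 S c (1 - cos φ)`. -/
lemma Lambda_bound (hc : 0 < c) (hS : 0 < S) (hcs : c ^ 2 + S ^ 2 = 1) (n : ℕ) (t M : ℝ)
    (ht : t ≠ 0) (hM : |t| ≤ M) (P : Polynomial ℂ) (hdeg : P.natDegree = n + 1)
    (hP : P = Polynomial.C (t : ℂ) * (Psi c S n).map (algebraMap ℝ ℂ)) (φ : ℝ) :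
    ‖(revPoly P).eval (uu c φ ^ 2) - (revPoly P).eval (uu c 0 ^ 2) / P.eval (uu c 0 ^ 2) *
        P.eval (uu c φ ^ 2)‖ ≤
      (2 * M / c * 5 / Real.sqrt (2 * S * c)) * Real.sqrt ‖uu c φ ^ 2 - uu c 0 ^ 2‖ := by
  have hev : ∀ φ, P.eval (uu c φ ^ 2) = t * (uu c φ ^ (n + 1) * GG c S n φ) := by
    intro φ
    rw [hP, Polynomial.eval_mul, Polynomial.eval_C, Polynomial.eval_map_algebraMap, Psi_eval hc hcs]
  have hrev : ∀ φ, (revPoly P).eval (uu c φ ^ 2) = t * (uu c φ ^ (n + 1) * (starRingEnd ℂ) (GG c S n φ)) := by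
    intro φ
    rw [revPoly_eval P (by rw [norm_pow, uu_norm hcs, one_pow]), hdeg, hev]
    simp only [map_mul, map_pow, Complex.conj_ofReal]
    have hunit : uu c φ * (starRingEnd ℂ) (uu c φ) = 1 := by
      rw [Complex.mul_conj, Complex.normSq_eq_norm_sq, uu_norm hcs]; simp
    calc _ = t * (uu c φ * (starRingEnd ℂ) (uu c φ)) ^ (n + 1) * (uu c φ ^ (n + 1) * (starRingEnd ℂ) (GG c S n φ)) := by ring
      _ = _ := by rw [hunit]; ring
  have hu0 : uu c 0 ≠ 0 := by intro h; have := uu_norm hcs 0; simp [h] at this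
  have hsig0 : sig c 0 = S := by
    simp only [sig, Real.cos_zero, one_pow, mul_one]
    rw [show 1 - c ^ 2 = S ^ 2 by linarith, Real.sqrt_sq hS.le]
  have hG0re : (GG c S n 0).re = S := by simp [GG]
  have hG0im : (GG c S n 0).im = S * ((1 - S) / c) := by simp [GG, hsig0]
  have hG0 : S ≤ ‖GG c S n 0‖ := by
    have := Complex.re_le_norm (GG c S n 0)
    rwa [hG0re] at this
  have hG0ne : GG c S n 0 ≠ 0 := norm_pos_iff.1 (hS.trans_le hG0)
  have htc : (t : ℂ) ≠ 0 := by exact_mod_cast ht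
  have hS1 : S < 1 := by nlinarith
  have hM0 : 0 ≤ M := (abs_nonneg t).trans hM
  have hE : (revPoly P).eval (uu c φ ^ 2) - (revPoly P).eval (uu c 0 ^ 2) / P.eval (uu c 0 ^ 2) *
        P.eval (uu c φ ^ 2) = t * uu c φ ^ (n + 1) *
        ((2 * ((GG c S n 0 * (starRingEnd ℂ) (GG c S n φ)).im : ℝ) : ℂ) * Complex.I) / GG c S n 0 := by
    rw [hev, hev, hrev, hrev]
    have := Complex.sub_conj (GG c S n 0 * (starRingEnd ℂ) (GG c S n φ))
    push_cast at this
    rw [← this]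
    simp only [map_mul, Complex.conj_conj]
    field_simp
  have him : (GG c S n 0 * (starRingEnd ℂ) (GG c S n φ)).im = S * ((1 - S) / c) *
      (Real.cos (n * φ) * (S * Real.cos φ - sig c φ) - Real.sin (n * φ) * Real.sin φ) := by
    rw [Complex.mul_im, hG0re, hG0im, Complex.conj_re, Complex.conj_im]
    simp only [GG, Complex.add_re, Complex.add_im, Complex.ofReal_re, Complex.ofReal_im,
      Complex.re_ofReal_mul, Complex.im_ofReal_mul, Complex.I_re, Complex.I_im]
    ring
  set δ := 1 - Real.cos φ with hδ
  have hδ0 : 0 ≤ δ := sub_nonneg.2 (Real.cos_le_one φ)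
  have hδ2 : δ ≤ 2 := by have := Real.neg_one_le_cos φ; linarith
  have hsin : Real.sin φ ^ 2 ≤ 2 * δ := by
    rw [Real.sin_sq]; nlinarith
  have hsd : |Real.sin φ| ≤ 2 * Real.sqrt δ := by
    apply abs_le_of_sq_le_sq _ (by positivity)
    rw [mul_pow, Real.sq_sqrt hδ0]; linarith
  have hle := le_sig hcs φ
  have hsig2 : (sig c φ - S) ^ 2 ≤ 2 * δ := by
    have h1 : sig c φ ^ 2 - S ^ 2 = c ^ 2 * Real.sin φ ^ 2 := by
      rw [sig_sq hcs, Real.sin_sq]; linarith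
    have h2 : c ^ 2 * Real.sin φ ^ 2 ≤ Real.sin φ ^ 2 := by nlinarith [sq_nonneg (Real.sin φ)]
    nlinarith
  have hsc : |S * Real.cos φ - sig c φ| ≤ 3 * Real.sqrt δ := by
    apply abs_le_of_sq_le_sq _ (by positivity)
    rw [mul_pow, Real.sq_sqrt hδ0]
    have h1 : (S * δ) ^ 2 ≤ 2 * δ := by
      have : S ^ 2 ≤ 1 := by nlinarith
      have : δ ^ 2 ≤ 2 * δ := by nlinarith
      rw [mul_pow]; nlinarith [sq_nonneg δ]
    have h2 : S * Real.cos φ - sig c φ = - ((sig c φ - S) + S * δ) := by rw [hδ]; ring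
    rw [h2]
    nlinarith [sq_nonneg ((sig c φ - S) - S * δ)]
  have hcomb : |Real.cos (n * φ) * (S * Real.cos φ - sig c φ) - Real.sin (n * φ) * Real.sin φ| ≤ 5 * Real.sqrt δ := by
    refine (abs_sub _ _).trans ?_
    rw [abs_mul, abs_mul]
    have h1 := mul_le_mul (Real.abs_cos_le_one (n * φ)) hsc (abs_nonneg _) zero_le_one
    have h2 := mul_le_mul (Real.abs_sin_le_one (n * φ)) hsd (abs_nonneg _) zero_le_one
    linarith
  have hz : 2 * S * c * δ ≤ ‖uu c φ ^ 2 - uu c 0 ^ 2‖ := by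
    have e : uu c φ ^ 2 - uu c 0 ^ 2 = (uu c 0 - uu c φ) * (-(uu c φ + uu c 0)) := by ring
    have h1 : c * δ ≤ ‖uu c 0 - uu c φ‖ := by
      refine le_trans (le_of_eq ?_) (Complex.re_le_norm _)
      simp only [uu, Complex.sub_re, Complex.add_re, Complex.ofReal_re, Complex.re_ofReal_mul, Complex.I_re, Real.cos_zero, hδ]
      ring
    have h2 : 2 * S ≤ ‖-(uu c φ + uu c 0)‖ := by
      rw [norm_neg]
      refine le_trans ?_ (Complex.im_le_norm _)
      simp only [uu, Complex.add_im, Complex.ofReal_im, Complex.im_ofReal_mul, Complex.I_im, hsig0]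
      linarith
    rw [e, norm_mul]
    have := mul_le_mul h1 h2 (by positivity) (norm_nonneg _)
    linarith
  have hsqrt : Real.sqrt (2 * S * c) * Real.sqrt δ ≤ Real.sqrt ‖uu c φ ^ 2 - uu c 0 ^ 2‖ := by
    rw [← Real.sqrt_mul (by positivity)]; exact Real.sqrt_le_sqrt hz
  have hq : 0 < Real.sqrt (2 * S * c) := Real.sqrt_pos.2 (by positivity)
  rw [hE, norm_div, norm_mul, norm_mul, norm_pow, uu_norm hcs, one_pow, mul_one, norm_mul, Complex.norm_I, mul_one,
    Complex.norm_mul, Complex.norm_real, Complex.norm_real, Complex.norm_two, him, Real.norm_eq_abs, Real.norm_eq_abs, abs_mul,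
    abs_of_nonneg (mul_nonneg hS.le (div_nonneg (by linarith) hc.le) : 0 ≤ S * ((1 - S) / c))]
  rw [div_le_iff₀ (hS.trans_le hG0)]
  have hfin : |t| * (2 * (S * ((1 - S) / c) *
      |Real.cos (n * φ) * (S * Real.cos φ - sig c φ) - Real.sin (n * φ) * Real.sin φ|)) ≤
      M * (2 * (S * (1 / c) * (5 * Real.sqrt δ))) := by
    gcongr
    linarith
  refine hfin.trans ?_
  have : 2 * M / c * 5 / Real.sqrt (2 * S * c) * (Real.sqrt (2 * S * c) * Real.sqrt δ) * S ≤
      2 * M / c * 5 / Real.sqrt (2 * S * c) * Real.sqrt ‖uu c φ ^ 2 - uu c 0 ^ 2‖ * ‖GG c S n 0‖ := by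
    gcongr
  refine le_trans (le_of_eq ?_) this
  field_simp
end

/-! ### Change of variables and conclusion -/

/-- Change of variables `θ = 2 arccos (cos (α / 2) cos φ)`. No integrability of `F` is required. -/
lemma integral_wAC (α : ℝ) (hα : α ∈ Set.Ioo 0 Real.pi) (F : ℝ → ℂ) :
    ∫ θ in Set.Ioo α (2 * Real.pi - α), F θ * (wAC α θ : ℂ) =
      ∫ φ in (0 : ℝ)..Real.pi, F (2 * Real.arccos (Real.cos (α / 2) * Real.cos φ)) *
        (wt (Real.cos (α / 2)) (Real.sin (α / 2)) φ : ℂ) := by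
  obtain ⟨hα0, hαπ⟩ := hα
  set c := Real.cos (α / 2) with hc'
  set S := Real.sin (α / 2) with hS'
  have hc : 0 < c := Real.cos_pos_of_mem_Ioo ⟨by linarith, by linarith⟩
  have hS : 0 < S := Real.sin_pos_of_pos_of_lt_pi (by linarith) (by linarith)
  have hcs : c ^ 2 + S ^ 2 = 1 := Real.cos_sq_add_sin_sq _
  have hc1 : c < 1 := by nlinarith
  have harc : Real.arccos c = α / 2 := Real.arccos_cos (by linarith) (by linarith)
  have hcosmem : ∀ φ ∈ Set.Ioo 0 Real.pi, -1 < Real.cos φ ∧ Real.cos φ < 1 := by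
    intro φ hφ
    constructor
    · rw [← Real.cos_pi]; exact Real.cos_lt_cos_of_nonneg_of_le_pi hφ.1.le le_rfl hφ.2
    · rw [← Real.cos_zero]; exact Real.cos_lt_cos_of_nonneg_of_le_pi le_rfl hφ.2.le hφ.1
  have himage : (fun φ => 2 * Real.arccos (c * Real.cos φ)) '' Set.Ioo 0 Real.pi =
      Set.Ioo α (2 * Real.pi - α) := by
    ext θ
    constructor
    · rintro ⟨φ, hφ, rfl⟩
      obtain ⟨h1, h2⟩ := hcosmem φ hφ
      have h3 : Real.arccos c < Real.arccos (c * Real.cos φ) :=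
        Real.arccos_lt_arccos (by nlinarith) (by nlinarith) hc1.le
      have h4 : Real.arccos (c * Real.cos φ) < Real.arccos (-c) :=
        Real.arccos_lt_arccos (by linarith) (by nlinarith) (by nlinarith)
      rw [Real.arccos_neg] at h4
      rw [harc] at h3 h4
      constructor <;> simp only <;> linarith
    · rintro ⟨h1, h2⟩
      have h3 : Real.cos (θ / 2) < c := Real.cos_lt_cos_of_nonneg_of_le_pi (by linarith) (by linarith) (by linarith)
      have h4 : -c < Real.cos (θ / 2) := by
        rw [hc', ← Real.cos_pi_sub]
        exact Real.cos_lt_cos_of_nonneg_of_le_pi (by linarith) (by linarith) (by linarith)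
      have h5 : Real.cos (θ / 2) / c < 1 := by rw [div_lt_one hc]; exact h3
      have h6 : -1 < Real.cos (θ / 2) / c := by rw [lt_div_iff₀ hc]; linarith
      refine ⟨Real.arccos (Real.cos (θ / 2) / c), ⟨Real.arccos_pos.2 h5, ?_⟩, ?_⟩
      · rw [← Real.arccos_neg_one]; exact Real.arccos_lt_arccos le_rfl h6 h5.le
      · simp only
        rw [Real.cos_arccos h6.le h5.le, mul_div_cancel₀ _ hc.ne', Real.arccos_cos (by linarith) (by linarith)]
        ring
  have hinj : Set.InjOn (fun φ => 2 * Real.arccos (c * Real.cos φ)) (Set.Ioo 0 Real.pi) := by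
    intro x hx y hy hxy
    have h1 := hcosmem x hx
    have h2 := hcosmem y hy
    have h3 : Real.arccos (c * Real.cos x) = Real.arccos (c * Real.cos y) := by
      simp only at hxy; linarith
    have h4 := Real.arccos_injOn ⟨by nlinarith, by nlinarith⟩ ⟨by nlinarith, by nlinarith⟩ h3
    exact Real.injOn_cos ⟨hx.1.le, hx.2.le⟩ ⟨hy.1.le, hy.2.le⟩ (mul_left_cancel₀ hc.ne' h4)
  have hderiv : ∀ φ ∈ Set.Ioo 0 Real.pi, HasDerivWithinAt (fun φ => 2 * Real.arccos (c * Real.cos φ))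
      (2 * (-(1 / Real.sqrt (1 - (c * Real.cos φ) ^ 2)) * (c * (-Real.sin φ)))) (Set.Ioo 0 Real.pi) φ := by
    intro φ hφ
    have h1 := hcosmem φ hφ
    have hd := Real.hasDerivAt_arccos (x := c * Real.cos φ) (by nlinarith) (by nlinarith)
    exact ((hd.comp φ ((Real.hasDerivAt_cos φ).const_mul c)).const_mul 2).hasDerivWithinAt
  rw [← himage, integral_image_eq_integral_abs_deriv_smul measurableSet_Ioo hderiv hinj,
    intervalIntegral.integral_of_le Real.pi_pos.le, integral_Ioc_eq_integral_Ioo]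
  apply setIntegral_congr_fun measurableSet_Ioo
  intro φ hφ
  have h1 := hcosmem φ hφ
  have hsin : 0 < Real.sin φ := Real.sin_pos_of_pos_of_lt_pi hφ.1 hφ.2
  have hsig := sig_pos hS hcs φ
  have hσ : Real.sqrt (1 - (c * Real.cos φ) ^ 2) = sig c φ := by rw [sig, mul_pow]
  simp only [Complex.real_smul]
  have habs : |2 * (-(1 / Real.sqrt (1 - (c * Real.cos φ) ^ 2)) * (c * (-Real.sin φ)))| =
      2 * c * Real.sin φ / sig c φ := by
    rw [hσ, show 2 * (-(1 / sig c φ) * (c * (-Real.sin φ))) = 2 * c * Real.sin φ / sig c φ by ring]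
    exact abs_of_pos (by positivity)
  have hw : wAC α (2 * Real.arccos (c * Real.cos φ)) = S / (2 * sig c φ * (c * Real.sin φ)) := by
    rw [wAC, ← hS', ← hc', mul_div_cancel_left₀ _ (two_ne_zero), Real.sin_arccos, hσ,
      Real.cos_arccos (by nlinarith) (by nlinarith)]
    congr 2
    rw [show c ^ 2 - (c * Real.cos φ) ^ 2 = (c * Real.sin φ) ^ 2 by rw [mul_pow, mul_pow, Real.sin_sq]; ring]
    exact Real.sqrt_sq (by positivity)
  have hprod : |2 * (-(1 / Real.sqrt (1 - (c * Real.cos φ) ^ 2)) * (c * (-Real.sin φ)))| *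
      wAC α (2 * Real.arccos (c * Real.cos φ)) = wt c S φ := by
    rw [habs, hw, wt]; field_simp
  rw [← hprod]; push_cast; ring

theorem stmt13 (α : ℝ) (hα : α ∈ Set.Ioo 0 Real.pi)
    (ψ : ℕ → Polynomial ℂ)
    (hdeg : ∀ n : ℕ, (ψ n).degree = n)
    (hlead : ∀ n : ℕ, 0 < (ψ n).leadingCoeff.re ∧ (ψ n).leadingCoeff.im = 0)
    (horth : ∀ n m : ℕ,
      ((1 / (2 * Real.pi) : ℝ) : ℂ) *
        ∫ θ in Set.Ioo α (2 * Real.pi - α),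
          (ψ n).eval (Complex.exp (θ * Complex.I)) *
            (starRingEnd ℂ) ((ψ m).eval (Complex.exp (θ * Complex.I))) * ((wAC α θ : ℝ) : ℂ)
        = if n = m then 1 else 0) :
    ∃ C > (0 : ℝ), ∀ n : ℕ, 1 ≤ n → ∀ θ ∈ Set.Ioo α (2 * Real.pi - α),
      ‖(revPoly (ψ n)).eval (Complex.exp (θ * Complex.I)) -
          ((revPoly (ψ n)).eval (Complex.exp (α * Complex.I)) /
              (ψ n).eval (Complex.exp (α * Complex.I))) *
            (ψ n).eval (Complex.exp (θ * Complex.I))‖ ≤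
        C * ‖Complex.exp (θ * Complex.I) - Complex.exp (α * Complex.I)‖ ^ ((1 : ℝ) / 2) ∧
      ‖(revPoly (ψ n)).eval (Complex.exp (θ * Complex.I)) -
          ((revPoly (ψ n)).eval (Complex.exp ((-α : ℝ) * Complex.I)) /
              (ψ n).eval (Complex.exp ((-α : ℝ) * Complex.I))) *
            (ψ n).eval (Complex.exp (θ * Complex.I))‖ ≤
        C * ‖Complex.exp (θ * Complex.I) - Complex.exp ((-α : ℝ) * Complex.I)‖ ^ ((1 : ℝ) / 2) := by
  obtain ⟨hα0, hαπ⟩ := id hα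
  set c := Real.cos (α / 2) with hc'
  set S := Real.sin (α / 2) with hS'
  have hc : 0 < c := Real.cos_pos_of_mem_Ioo ⟨by linarith, by linarith⟩
  have hS : 0 < S := Real.sin_pos_of_pos_of_lt_pi (by linarith) (by linarith)
  have hcs : c ^ 2 + S ^ 2 = 1 := Real.cos_sq_add_sin_sq _
  have hzexp : ∀ φ, uu c φ ^ 2 =
      Complex.exp (((2 * Real.arccos (c * Real.cos φ) : ℝ) : ℂ) * Complex.I) := by
    intro φ
    rw [uu_eq_exp hc hS hcs, ← Complex.exp_nat_mul]; push_cast; ring_nf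
  have hip : ∀ n m, ip c S (ψ n) (ψ m) = if n = m then 2 * Real.pi else 0 := by
    intro n m
    have h := horth n m
    rw [integral_wAC α hα (fun θ => (ψ n).eval (Complex.exp (θ * Complex.I)) *
      (starRingEnd ℂ) ((ψ m).eval (Complex.exp (θ * Complex.I))))] at h
    simp only [← hc', ← hS', ← hzexp] at h
    change _ * ip c S (ψ n) (ψ m) = _ at h
    have hpi : (Real.pi : ℂ) ≠ 0 := by exact_mod_cast Real.pi_ne_zero
    push_cast at h
    field_simp at h
    rw [h]; split_ifs <;> simp
  set M := Real.sqrt (4 / S ^ 3) with hM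
  -- Identification of `ψ (n + 1)` with a multiple of `Psi c S n`; the size of the multiple is
  -- controlled through the normalisation `⟨ψ, ψ⟩ = 1`.
  have hmain : ∀ n : ℕ, ∃ t : ℝ, t ≠ 0 ∧ |t| ≤ M ∧
      ψ (n + 1) = Polynomial.C (t : ℂ) * (Psi c S n).map (algebraMap ℝ ℂ) := by
    intro n
    set Ψ := (Psi c S n).map (algebraMap ℝ ℂ) with hΨ
    obtain ⟨hd1, hd2⟩ := Psi_coeff (c := c) (S := S) n
    have hl : (0 : ℝ) < 1 / (2 * c ^ (n + 1)) := by positivity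
    have hnat : (Psi c S n).natDegree = n + 1 :=
      Polynomial.natDegree_eq_of_le_of_coeff_ne_zero hd1 (by rw [hd2]; exact hl.ne')
    have hne : Psi c S n ≠ 0 := fun h => by simp [h] at hnat
    have hlead' : (Psi c S n).leadingCoeff = 1 / (2 * c ^ (n + 1)) := by
      rw [Polynomial.leadingCoeff, hnat, hd2]
    have hΨdeg : Ψ.degree = ((n + 1 : ℕ) : WithBot ℕ) := by
      rw [hΨ, Polynomial.degree_map, Polynomial.degree_eq_natDegree hne, hnat]
    have hΨlead : Ψ.leadingCoeff = ((1 / (2 * c ^ (n + 1)) : ℝ) : ℂ) := by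
      rw [hΨ, Polynomial.leadingCoeff_map, hlead']; rfl
    have huniq := ortho_unique hS hcs ψ hdeg (fun n m h => by rw [hip, if_neg h, Complex.ofReal_zero])
      (fun n => by
        rw [hip, if_pos rfl]
        exact_mod_cast (by positivity : (2 * Real.pi : ℝ) ≠ 0)) (n + 1) Ψ hΨdeg
      (fun k hk => ip_Psi hc hS hcs n k (by omega))
    have hψlead : (ψ (n + 1)).leadingCoeff = (((ψ (n + 1)).leadingCoeff.re : ℝ) : ℂ) :=
      Complex.ext rfl (by simpa using (hlead (n + 1)).2)
    set l := (ψ (n + 1)).leadingCoeff.re with hl'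
    have hlpos : 0 < l := (hlead (n + 1)).1
    set a := 1 / (2 * c ^ (n + 1)) with ha
    have hψ : ψ (n + 1) = Polynomial.C ((l / a : ℝ) : ℂ) * Ψ := by
      rw [hΨlead, hψlead] at huniq
      have ha0 : (a : ℂ) ≠ 0 := by exact_mod_cast hl.ne'
      apply mul_left_cancel₀ (Polynomial.C_ne_zero.2 ha0)
      rw [huniq, ← mul_assoc, ← Polynomial.C_mul]
      congr 2
      push_cast; field_simp
    refine ⟨l / a, by positivity, ?_, hψ⟩
    have hnorm := hip (n + 1) (n + 1)
    rw [if_pos rfl, hψ, ip_C_mul_left, ip_conj, ip_C_mul_left, map_mul, Complex.conj_ofReal,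
      ← mul_assoc, ← Complex.ofReal_mul] at hnorm
    have hre := congrArg Complex.re hnorm
    rw [Complex.re_ofReal_mul, Complex.conj_re] at hre
    have hlow := ip_Psi_self_lower hc hS hcs n
    rw [← hΨ] at hlow
    rw [Complex.ofReal_re] at hre
    rw [hM]
    apply Real.abs_le_sqrt
    rw [le_div_iff₀ (by positivity)]
    have := mul_le_mul_of_nonneg_left hlow (mul_self_nonneg (l / a))
    rw [hre] at this
    have hpi := Real.pi_pos
    have h3 : Real.pi * ((l / a) ^ 2 * S ^ 3) ≤ Real.pi * 4 := by nlinarith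
    exact le_of_mul_le_mul_left h3 hpi
  have hM0 : 0 < M := Real.sqrt_pos.2 (by positivity)
  have hu0 : uu c 0 ^ 2 = Complex.exp (α * Complex.I) := by
    rw [hzexp, Real.cos_zero, mul_one, hc', Real.arccos_cos (by linarith) (by linarith)]
    push_cast; ring_nf
  have hu0c : (starRingEnd ℂ) (uu c 0 ^ 2) = Complex.exp ((-α : ℝ) * Complex.I) := by
    rw [hu0, ← Complex.exp_conj]; simp
  refine ⟨2 * M / c * 5 / Real.sqrt (2 * S * c), by positivity, ?_⟩
  intro n hn θ hθ
  obtain ⟨n, rfl⟩ : ∃ k, n = k + 1 := ⟨n - 1, by omega⟩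
  obtain ⟨t, ht, htM, hP⟩ := hmain n
  have hnat : (ψ (n + 1)).natDegree = n + 1 := Polynomial.natDegree_eq_of_degree_eq_some (hdeg (n + 1))
  obtain ⟨h1, h2⟩ := hθ
  have h3 : Real.cos (θ / 2) < c := Real.cos_lt_cos_of_nonneg_of_le_pi (by linarith) (by linarith) (by linarith)
  have h4 : -c < Real.cos (θ / 2) := by
    rw [hc', ← Real.cos_pi_sub]
    exact Real.cos_lt_cos_of_nonneg_of_le_pi (by linarith) (by linarith) (by linarith)
  have h5 : Real.cos (θ / 2) / c < 1 := by rw [div_lt_one hc]; exact h3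
  have h6 : -1 < Real.cos (θ / 2) / c := by rw [lt_div_iff₀ hc]; linarith
  -- The parameter with `cos (θ / 2) = c cos φ`.
  set φ := Real.arccos (Real.cos (θ / 2) / c) with hφ
  have hz : uu c φ ^ 2 = Complex.exp (θ * Complex.I) := by
    rw [hzexp, hφ, Real.cos_arccos h6.le h5.le, mul_div_cancel₀ _ hc.ne',
      Real.arccos_cos (by linarith) (by linarith)]
    push_cast; ring_nf
  have hzn : ∀ φ, ‖uu c φ ^ 2‖ = 1 := fun φ => by rw [norm_pow, uu_norm hcs, one_pow]
  have hconj : ∀ z, (ψ (n + 1)).eval ((starRingEnd ℂ) z) = (starRingEnd ℂ) ((ψ (n + 1)).eval z) := by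
    intro z
    rw [hP, Polynomial.eval_mul, Polynomial.eval_mul, Polynomial.eval_map_algebraMap,
      Polynomial.eval_map_algebraMap, Polynomial.aeval_conj]
    simp
  have hconjr : ∀ φ, (revPoly (ψ (n + 1))).eval ((starRingEnd ℂ) (uu c φ ^ 2)) =
      (starRingEnd ℂ) ((revPoly (ψ (n + 1))).eval (uu c φ ^ 2)) := by
    intro φ
    rw [revPoly_eval _ (hzn φ), revPoly_eval _ (by rw [RCLike.norm_conj]; exact hzn φ), hconj, map_mul,
      map_pow (starRingEnd ℂ) (uu c φ ^ 2)]
  rw [← Real.sqrt_eq_rpow, ← Real.sqrt_eq_rpow, ← hu0c, ← hu0, ← hz]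
  constructor
  · exact Lambda_bound hc hS hcs n t M ht htM _ hnat hP φ
  -- The coefficients of `ψ` are real and `φ ↦ π - φ` conjugates the point of the arc, so the
  -- bound at `e^{-iα}` is the conjugate of the one at `e^{iα}`.
  · have hb := Lambda_bound hc hS hcs n t M ht htM _ hnat hP (Real.pi - φ)
    rw [uu_pi_sub] at hb
    rw [hconj, hconjr]
    rw [hconj, hconjr] at hb
    convert hb using 1
    · rw [← RCLike.norm_conj]; simp only [map_sub, map_mul, map_div₀, Complex.conj_conj]
    · congr 2
      rw [← RCLike.norm_conj]; simp only [map_sub, Complex.conj_conj]
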